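/- Fix c ∈ ℝ, r > 0, and σ² > 0, and define D(ω) := ∫_{c−r}^{c+r} φ(t; ω, σ²) dt, the probability that a Gaussian signal centered at ω with variance σ² lands in the window [c−r, c+r]. Then D is symmetric about c (D(c+x) = D(c−x) for all x) and strictly decreasing in the distance to c: for all ω, ω′ with |ω − c| < |ω′ − c|, D(ω) > D(ω′). -/

import Mathlib

open MeasureTheory Real Filter

/-- The Gaussian density with mean `m` and variance `v`. -/
noncomputable def gauss (x m v : ℝ) : ℝ :=
  (Real.sqrt (2 * Real.pi * v))⁻¹ * Real.exp (-(x - m) ^ 2 / (2 * v))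

/-- `D(ω)`: the probability a Gaussian signal centered at `ω` lands in `[c−r, c+r]`. -/
noncomputable def winProb (c r v ω : ℝ) : ℝ :=
  ∫ t in Set.Icc (c - r) (c + r), gauss t ω v

lemma winProb_eq (c r v x : ℝ) (hr : 0 < r) :
    winProb c r v (c + x) = ∫ s in (-r - x)..(r - x), gauss s 0 v := by
  unfold winProb
  rw [integral_Icc_eq_integral_Ioc, ← intervalIntegral.integral_of_le (by linarith)]
  have h := intervalIntegral.integral_comp_sub_right (a := c - r) (b := c + r)
    (fun s => gauss s 0 v) (c + x)
  have e1 : c - r - (c + x) = -r - x := by ring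
  have e2 : c + r - (c + x) = r - x := by ring
  rw [e1, e2] at h
  rw [← h]
  congr 1
  funext t
  simp [gauss]

lemma gauss_even (v s : ℝ) : gauss (-s) 0 v = gauss s 0 v := by
  simp [gauss]

lemma gauss_cont (v : ℝ) : Continuous (fun s => gauss s 0 v) := by
  unfold gauss
  fun_prop

lemma winProb_symm (c r v x : ℝ) (hr : 0 < r) :
    winProb c r v (c + x) = winProb c r v (c + -x) := by
  rw [winProb_eq c r v x hr, winProb_eq c r v (-x) hr]
  have h := intervalIntegral.integral_comp_neg (a := -r - x) (b := r - x)
    (fun s => gauss s 0 v)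
  simp only [gauss_even] at h
  rw [h]
  congr 1 <;> ring

lemma gauss_lt (v r u : ℝ) (hv : 0 < v) (hr : 0 < r) (hu : 0 < u) :
    gauss (r + u) 0 v < gauss (r - u) 0 v := by
  unfold gauss
  have : 0 < Real.sqrt (2 * Real.pi * v) := Real.sqrt_pos.2 (by positivity)
  refine mul_lt_mul_of_pos_left (Real.exp_lt_exp.2 ?_) (inv_pos.2 this)
  apply div_lt_div_of_pos_right _ (by positivity)
  nlinarith [mul_pos hr hu]

lemma winProb_lt (c r v x y : ℝ) (hr : 0 < r) (hv : 0 < v) (hx : 0 ≤ x) (hxy : x < y) :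
    winProb c r v (c + y) < winProb c r v (c + x) := by
  rw [winProb_eq c r v x hr, winProb_eq c r v y hr]
  have hc := gauss_cont v
  have hi : ∀ a b : ℝ, IntervalIntegrable (fun s => gauss s 0 v) volume a b :=
    fun a b => hc.intervalIntegrable a b
  have key : (∫ u in x..y, gauss (r + u) 0 v) < ∫ u in x..y, gauss (r - u) 0 v := by
    apply intervalIntegral.integral_lt_integral_of_continuousOn_of_le_of_exists_lt hxy
    · exact (hc.comp (continuous_const.add continuous_id)).continuousOn
    · exact (hc.comp (continuous_const.sub continuous_id)).continuousOn
    · intro u hu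
      exact (gauss_lt v r u hv hr (lt_of_le_of_lt hx hu.1)).le
    · exact ⟨y, ⟨hxy.le, le_rfl⟩, gauss_lt v r y hv hr (lt_of_le_of_lt hx hxy)⟩
  have h1 := intervalIntegral.integral_comp_sub_left (a := x) (b := y)
    (fun s => gauss s 0 v) r
  have h2 := intervalIntegral.integral_comp_sub_left (a := x) (b := y)
    (fun s => gauss s 0 v) (-r)
  have h3 : (fun u => gauss (r + u) 0 v) = fun u => gauss (-r - u) 0 v := by
    funext u
    rw [← gauss_even]
    congr 1
    ring
  rw [h3] at key
  have a1 := intervalIntegral.integral_add_adjacent_intervals (hi (-r - y) (-r - x)) (hi (-r - x) (r - x))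
  have a2 := intervalIntegral.integral_add_adjacent_intervals (hi (-r - y) (r - y)) (hi (r - y) (r - x))
  linarith

lemma winProb_abs (c r v ω : ℝ) (hr : 0 < r) :
    winProb c r v ω = winProb c r v (c + |ω - c|) := by
  rcases abs_cases (ω - c) with ⟨h, _⟩ | ⟨h, _⟩
  · rw [h]; congr 1; ring
  · rw [h, ← winProb_symm c r v _ hr]; congr 1; ring

/-- The window probability is symmetric about `c` and strictly decreasing in the distance
of the signal mean `ω` to `c`. -/
theorem stmt_14 (c r v : ℝ) (hr : 0 < r) (hv : 0 < v) :
    (∀ x : ℝ, winProb c r v (c + x) = winProb c r v (c - x)) ∧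
    (∀ ω ω' : ℝ, |ω - c| < |ω' - c| → winProb c r v ω' < winProb c r v ω) := by
  refine ⟨fun x => ?_, fun ω ω' h => ?_⟩
  · rw [sub_eq_add_neg]
    exact winProb_symm c r v x hr
  · rw [winProb_abs c r v ω hr, winProb_abs c r v ω' hr]
    exact winProb_lt c r v _ _ hr hv (abs_nonneg _) h
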